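/- There is an absolute constant C such that for every α ∈ (0, 1/1000] and every three times continuously differentiable f on (0,∞)×(0,π/2) with ‖((1+R)³/R²) f‖_{W^{3,∞}} < ∞, the H³ norm of f is finite and ‖f‖_{H³} ≤ C ‖((1+R)³/R²) f‖_{W^{3,∞}}. -/

import Mathlib

open Real MeasureTheory Set

noncomputable section

namespace Paper

/-- The domain `(0,∞) × (0,π/2)` in the `(R,β)` variables. -/
def Qdom : Set (ℝ × ℝ) := Set.Ioi (0:ℝ) ×ˢ Set.Ioo (0:ℝ) (Real.pi/2)

/-- Inner product `⟨f,g⟩ = ∫₀^∞ ∫₀^{π/2} f g dβ dR`. -/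
def inner2 (f g : ℝ → ℝ → ℝ) : ℝ :=
  ∫ R in Set.Ioi (0:ℝ), ∫ β in Set.Ioo (0:ℝ) (Real.pi/2), f R β * g R β

/-- The `L²` norm `‖f‖₂`. -/
def norm2 (f : ℝ → ℝ → ℝ) : ℝ := Real.sqrt (inner2 f f)

/-- `‖h‖_{L²(R)}` for functions of `R` alone. -/
def normR (h : ℝ → ℝ) : ℝ := Real.sqrt (∫ R in Set.Ioi (0:ℝ), (h R)^2)

/-- `D_R = R ∂_R`. -/
def DR (f : ℝ → ℝ → ℝ) : ℝ → ℝ → ℝ := fun R β => R * deriv (fun r => f r β) R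

/-- `D_R` for functions of `R` alone. -/
def DR1 (h : ℝ → ℝ) : ℝ → ℝ := fun R => R * deriv h R

/-- `D_β = sin(2β) ∂_β`. -/
def Dbeta (f : ℝ → ℝ → ℝ) : ℝ → ℝ → ℝ :=
  fun R β => Real.sin (2*β) * deriv (fun b => f R b) β

/-- `L₁₂(Ω)(R) = ∫_R^∞ ∫₀^{π/2} Ω(s,β) sin(2β) s⁻¹ dβ ds`. -/
def L12 (Ω : ℝ → ℝ → ℝ) (R : ℝ) : ℝ :=
  ∫ s in Set.Ioi R, ∫ β in Set.Ioo (0:ℝ) (Real.pi/2), Ω s β * Real.sin (2*β) / s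

/-- `L̃₁₂(Ω)(R) = L₁₂(Ω)(R) − L₁₂(Ω)(0)`. -/
def tL12 (Ω : ℝ → ℝ → ℝ) (R : ℝ) : ℝ := L12 Ω R - L12 Ω 0

/-- Compact support contained in the open domain `(0,∞)×(0,π/2)`. -/
def suppIn (f : ℝ → ℝ → ℝ) : Prop :=
  ∃ K : Set (ℝ × ℝ), IsCompact K ∧ K ⊆ Qdom ∧ ∀ x y : ℝ, (x, y) ∉ K → f x y = 0

/-- Integrability over the domain. -/
def Integrable2 (f : ℝ → ℝ → ℝ) : Prop :=
  MeasureTheory.IntegrableOn (Function.uncurry f) Qdom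

/-- `Γ(β) = (cos β)^α`. -/
def Γf (α : ℝ) (β : ℝ) : ℝ := Real.cos β ^ α

/-- The normalizing constant `c = (2/π)∫₀^{π/2} Γ(β) sin(2β) dβ`. -/
def cst (α : ℝ) : ℝ :=
  (2/Real.pi) * ∫ β in Set.Ioo (0:ℝ) (Real.pi/2), Γf α β * Real.sin (2*β)

/-- The approximate profile `Ω̄`. -/
def Ωbar (α : ℝ) : ℝ → ℝ → ℝ := fun R β => (α / cst α) * Γf α β * (3*R/(1+R)^2)

/-- The approximate profile `η̄`. -/
def ηbar (α : ℝ) : ℝ → ℝ → ℝ := fun R β => (α / cst α) * Γf α β * (6*R/(1+R)^3)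

/-- The singular weight `φ₁ = (1+R)⁴R⁻⁴ sin(2β)^{-σ}`, `σ = 99/100`. -/
def phi1 : ℝ → ℝ → ℝ := fun R β => (1+R)^4 / R^4 * Real.sin (2*β) ^ (-(99/100 : ℝ))

/-- The singular weight `φ₂ = (1+R)⁴R⁻⁴ sin(2β)^{-γ}`, `γ = 1 + α/10`. -/
def phi2 (α : ℝ) : ℝ → ℝ → ℝ := fun R β => (1+R)^4 / R^4 * Real.sin (2*β) ^ (-(1 + α/10))

/-- The singular weight `ψ₁ = (1+R)⁴R⁻⁴ (sin β cos β)^{-σ}`. -/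
def psi1 : ℝ → ℝ → ℝ := fun R β =>
  (1+R)^4 / R^4 * (Real.sin β * Real.cos β) ^ (-(99/100 : ℝ))

/-- The singular weight `ψ₂ = (1+R)⁴R⁻⁴ (sin β)^{-σ}(cos β)^{-γ}`. -/
def psi2 (α : ℝ) : ℝ → ℝ → ℝ := fun R β =>
  (1+R)^4 / R^4 * Real.sin β ^ (-(99/100 : ℝ)) * Real.cos β ^ (-(1 + α/10))

/-- `c_ω = −(2/(πα)) L₁₂(Ω)(0)`. -/
def cω (α : ℝ) (Ω : ℝ → ℝ → ℝ) : ℝ := -(2/(Real.pi*α)) * L12 Ω 0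

/-- The linearized operator `L₁`. -/
def opL1 (α : ℝ) (Ω η : ℝ → ℝ → ℝ) : ℝ → ℝ → ℝ := fun R β =>
  - DR Ω R β - (3/(1+R)) * Dbeta Ω R β - Ω R β + η R β
  + cω α Ω * (Ωbar α R β - DR (Ωbar α) R β)

/-- The linearized operator `L₂`. -/
def opL2 (α : ℝ) (Ω η : ℝ → ℝ → ℝ) : ℝ → ℝ → ℝ := fun R β =>
  - DR η R β - (3/(1+R)) * Dbeta η R β + (-2 + 3/(1+R)) * η R β
  + (2/(Real.pi*α)) * tL12 Ω R * ηbar α R β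
  + cω α Ω * (ηbar α R β - DR (ηbar α) R β)

/-- `ξ̄` in Cartesian variables. -/
def ξbarC (α : ℝ) (x y : ℝ) : ℝ :=
  -(18*α^2 / cst α) * ∫ z in Set.Ioo (0:ℝ) x,
      (y/(y^2+z^2)) * (z ^ α * (z^2+y^2) ^ (α/2) / (1 + (z^2+y^2) ^ (α/2))^4)

/-- `ξ̄` in the `(R,β)` variables, via `x = R^{1/α} cos β`, `y = R^{1/α} sin β`. -/
def ξbar (α : ℝ) : ℝ → ℝ → ℝ := fun R β =>
  ξbarC α (R ^ (1/α) * Real.cos β) (R ^ (1/α) * Real.sin β)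

/-- The linearized operator `L₃`. -/
def opL3 (α : ℝ) (Ω ξ : ℝ → ℝ → ℝ) : ℝ → ℝ → ℝ := fun R β =>
  - DR ξ R β - (3/(1+R)) * Dbeta ξ R β + (-2 - 3/(1+R)) * ξ R β
  - (2/(Real.pi*α)) * tL12 Ω R * ξbar α R β
  + cω α Ω * (3 * ξbar α R β - DR (ξbar α) R β)

/-- Weighted Sobolev norm `H^m` with radial weight `w1` and angular weight `w2`:
`‖f‖ = Σ_{0≤k≤m} ‖(D_R^k f)√w1‖₂ + Σ_{i+j≤m−1} ‖(D_R^i D_β^{j+1} f)√w2‖₂`. -/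
def Hnorm (m : ℕ) (w1 w2 : ℝ → ℝ → ℝ) (f : ℝ → ℝ → ℝ) : ℝ :=
  (∑ k ∈ Finset.range (m+1),
    norm2 (fun R β => DR^[k] f R β * Real.sqrt (w1 R β)))
  + ∑ p ∈ (Finset.range (m+1) ×ˢ Finset.range (m+1)).filter
      (fun p => p.1 + p.2 + 1 ≤ m),
      norm2 (fun R β => DR^[p.1] (Dbeta^[p.2+1] f) R β * Real.sqrt (w2 R β))

/-- Sup of `|f|` over the domain `(0,∞)×(0,π/2)`. -/
def supDom (f : ℝ → ℝ → ℝ) : ℝ :=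
  ⨆ (R : Set.Ioi (0:ℝ)) (β : Set.Ioo (0:ℝ) (Real.pi/2)), |f R.1 β.1|

/-- The weighted `C¹` norm. -/
def C1norm (α : ℝ) (f : ℝ → ℝ → ℝ) : ℝ :=
  supDom f + supDom (fun R β => (1+R)/R * DR f R β)
  + supDom (fun R β =>
      (1 + (R * Real.sin (2*β) ^ α) ^ (-(1/40 : ℝ))) * Dbeta f R β)

/-- Boundedness of `f` on the domain. -/
def BddDom (f : ℝ → ℝ → ℝ) : Prop :=
  ∃ M : ℝ, ∀ R ∈ Set.Ioi (0:ℝ), ∀ β ∈ Set.Ioo (0:ℝ) (Real.pi/2), |f R β| ≤ M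

/-- Finiteness of the weighted `C¹` norm. -/
def C1Fin (α : ℝ) (f : ℝ → ℝ → ℝ) : Prop :=
  BddDom f ∧ BddDom (fun R β => (1+R)/R * DR f R β) ∧
  BddDom (fun R β => (1 + (R * Real.sin (2*β) ^ α) ^ (-(1/40 : ℝ))) * Dbeta f R β)

/-- The weighted `W^{l,∞}` norm. -/
def Wnorm (α : ℝ) (l : ℕ) (f : ℝ → ℝ → ℝ) : ℝ :=
  (∑ k ∈ Finset.range (l+1), supDom (DR^[k] f))
  + ∑ p ∈ (Finset.range (l+1) ×ˢ Finset.range (l+1)).filter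
      (fun p => p.1 + p.2 ≤ l ∧ 1 ≤ p.2),
      supDom (fun R β => Real.sin (2*β) ^ (-(α/5)) *
        DR^[p.1] (fun R' β' => Dbeta^[p.2] f R' β' / (α/10 + Real.sin (2*β'))) R β)

/-- Finiteness of the `W^{l,∞}` norm. -/
def WFin (α : ℝ) (l : ℕ) (f : ℝ → ℝ → ℝ) : Prop :=
  (∀ k ≤ l, BddDom (DR^[k] f)) ∧
  ∀ k j : ℕ, k + j ≤ l → 1 ≤ j →
    BddDom (fun R β => Real.sin (2*β) ^ (-(α/5)) *
      DR^[k] (fun R' β' => Dbeta^[j] f R' β' / (α/10 + Real.sin (2*β'))) R β)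

/-- `I(f)(x,y) = ∫₀ˣ f(z,y)/z dz`. -/
def Ifun (f : ℝ → ℝ → ℝ) : ℝ → ℝ → ℝ := fun x y => ∫ z in Set.Ioo (0:ℝ) x, f z y / z

/-- `D_S g = (1/α)(z ∂_z g + y ∂_y g)` in Cartesian variables. -/
def DScart (α : ℝ) (g : ℝ → ℝ → ℝ) : ℝ → ℝ → ℝ := fun a b =>
  (1/α) * (a * deriv (fun a' => g a' b) a + b * deriv (fun b' => g a b') b)

/-- `D_τ g = 2y ∂_y g − 2α (y²/(y²+z²)) D_S g` in Cartesian variables. -/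
def DTcart (α : ℝ) (g : ℝ → ℝ → ℝ) : ℝ → ℝ → ℝ := fun a b =>
  2*b * deriv (fun b' => g a b') b - 2*α*(b^2/(b^2+a^2)) * DScart α g a b

/-!
In the variable `t = log R` the operator `D_R` is `d/dt`, so the Leibniz rule for iterated
derivatives applies to `f = ρF`, where `ρ = R²/(1+R)³` and `F = f/ρ` is bounded in `W^{l,∞}`.
Since `ρ = s²(1 - s)` for the sigmoid `s = R/(1+R)`, every `D_R^k ρ` is `O(ρ)`, and hence
`D_R^k D_β^j f` is, up to a constant, pointwise at most `ρ` times `max_{i ≤ k} |D_R^i D_β^j F|`.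
The `L²` norms then split into a radial integral of `ρ²(1+R)⁴R⁻⁴ = (1+R)⁻²` and an angular
integral of `sin(2β)^{-σ}`, respectively of `(α/10 + sin 2β)² sin(2β)^{3α/10 - 1}`, which
stays bounded as `α → 0`.
-/

section RadialDerivative

lemma deriv_comp_exp (h : ℝ → ℝ) (t : ℝ) :
    deriv (fun s ↦ h (exp s)) t = exp t * deriv h (exp t) := by
  by_cases hd : DifferentiableAt ℝ h (exp t)
  · rw [mul_comm]
    exact (hd.hasDerivAt.comp t (hasDerivAt_exp t)).deriv
  · have hd' : ¬ DifferentiableAt ℝ (fun s ↦ h (exp s)) t := by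
      contrapose! hd
      rw [← log_exp t] at hd
      have hlog := hd.comp (exp t) (differentiableAt_log (exp_ne_zero t))
      refine hlog.congr_of_eventuallyEq ?_
      filter_upwards [Ioi_mem_nhds (exp_pos t)] with r hr
      simp only [Function.comp_apply, exp_log hr]
    rw [deriv_zero_of_not_differentiableAt hd, deriv_zero_of_not_differentiableAt hd', mul_zero]

lemma DR_iterate_exp (k : ℕ) (f : ℝ → ℝ → ℝ) (t β : ℝ) :
    DR^[k] f (exp t) β = iteratedDeriv k (fun s ↦ f (exp s) β) t := by
  induction k generalizing f with
  | zero => rfl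
  | succ k ih =>
    have hDR : (fun s ↦ DR f (exp s) β) = deriv (fun s ↦ f (exp s) β) :=
      funext fun s ↦ (deriv_comp_exp (f · β) s).symm
    rw [Function.iterate_succ_apply, ih, iteratedDeriv_succ', hDR]

variable {f g : ℝ → ℝ → ℝ} {R β : ℝ}

lemma DR_iterate_congr (k : ℕ) (hfg : ∀ r, 0 < r → f r β = g r β) (hR : 0 < R) :
    DR^[k] f R β = DR^[k] g R β := by
  rw [← exp_log hR, DR_iterate_exp, DR_iterate_exp]
  simp only [hfg _ (exp_pos _)]

lemma DR_iterate_angular_mul (k : ℕ) (d : ℝ → ℝ) (f : ℝ → ℝ → ℝ) (hR : 0 < R) :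
    DR^[k] (fun r b ↦ d b * f r b) R β = d β * DR^[k] f R β := by
  rw [← exp_log hR, DR_iterate_exp, DR_iterate_exp, iteratedDeriv_const_mul_field]

lemma Dbeta_iterate_radial_mul (j : ℕ) (w : ℝ → ℝ) (f : ℝ → ℝ → ℝ) :
    Dbeta^[j] (fun R β ↦ w R * f R β) = fun R β ↦ w R * Dbeta^[j] f R β := by
  induction j generalizing f with
  | zero => rfl
  | succ j ih =>
    have hDbeta : Dbeta (fun R β ↦ w R * f R β) = fun R β ↦ w R * Dbeta f R β := by
      funext R β
      simp only [Dbeta, deriv_const_mul_field]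
      ring
    rw [Function.iterate_succ_apply, hDbeta, ih, Function.iterate_succ_apply]

end RadialDerivative

section RadialProfile

open Polynomial

/-- The radial decay profile `R²/(1+R)³`, the reciprocal of the weight multiplying `f` in the
`W^{l,∞}` norm. -/
def radialProfile (R : ℝ) : ℝ := R ^ 2 / (1 + R) ^ 3

lemma radialProfile_nonneg {R : ℝ} (hR : 0 < R) : 0 ≤ radialProfile R := by
  unfold radialProfile
  positivity

lemma radialProfile_mul_inv_mul {R : ℝ} (hR : 0 < R) (y : ℝ) :
    radialProfile R * ((1 + R) ^ 3 / R ^ 2 * y) = y := by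
  unfold radialProfile
  field_simp

lemma radialProfile_exp (t : ℝ) :
    radialProfile (exp t) = (X ^ 2 * (1 - X) : ℝ[X]).eval (sigmoid t) := by
  simp only [radialProfile, sigmoid_def, exp_neg, eval_mul, eval_pow, eval_X, eval_sub, eval_one]
  field_simp
  ring

lemma iteratedDeriv_eval_sigmoid (k : ℕ) (p : ℝ[X]) :
    iteratedDeriv k (fun t ↦ p.eval (sigmoid t)) =
      fun t ↦ ((fun q ↦ X * (1 - X) * derivative q)^[k] p).eval (sigmoid t) := by
  induction k generalizing p with
  | zero => rfl
  | succ k ih =>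
    have hderiv : deriv (fun t ↦ p.eval (sigmoid t)) =
        fun t ↦ (X * (1 - X) * derivative p).eval (sigmoid t) := by
      funext t
      refine ((p.hasDerivAt _).comp t (hasDerivAt_sigmoid t)).deriv.trans ?_
      simp only [eval_mul, eval_X, eval_sub, eval_one]
      ring
    rw [iteratedDeriv_succ', hderiv, ih, Function.iterate_succ_apply]

lemma dvd_iterate_mul_derivative {R : Type*} [CommSemiring R] {a w p : R[X]}
    (hw : w ∣ a * derivative w) (hp : w ∣ p) (k : ℕ) :
    w ∣ (fun q ↦ a * derivative q)^[k] p := by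
  induction k generalizing p with
  | zero => exact hp
  | succ _ ih =>
    refine ih ?_
    obtain ⟨q, rfl⟩ := hp
    change w ∣ a * derivative (w * q)
    rw [derivative_mul, mul_add, ← mul_assoc, mul_left_comm]
    exact dvd_add (hw.mul_right q) (dvd_mul_right w _)

lemma exists_abs_eval_sigmoid_le (p : ℝ[X]) : ∃ C, ∀ t, |p.eval (sigmoid t)| ≤ C := by
  obtain ⟨C, hC⟩ := isCompact_Icc.exists_bound_of_continuousOn (f := fun x ↦ p.eval x)
    (p.continuous.continuousOn (s := Icc 0 1))
  exact ⟨C, fun t ↦ hC _ ⟨sigmoid_nonneg t, sigmoid_le_one t⟩⟩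

/- With `s = sigmoid t`, the profile is `s²(1 - s)` and `d/dt` acts on polynomials in `s` as
`s(1 - s) d/ds`, which preserves the multiples of `s²(1 - s)`. -/
lemma exists_abs_iteratedDeriv_radialProfile_exp_le (k : ℕ) :
    ∃ C, ∀ t, |iteratedDeriv k (fun s ↦ radialProfile (exp s)) t| ≤ C * radialProfile (exp t) := by
  have hdvd : (X ^ 2 * (1 - X) : ℝ[X]) ∣ X * (1 - X) * derivative (X ^ 2 * (1 - X)) := by
    refine ⟨2 - 3 * X, ?_⟩
    simp only [derivative_mul, derivative_X_pow, derivative_sub, derivative_one, derivative_X,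
      Nat.cast_ofNat, map_ofNat]
    ring
  obtain ⟨q, hq⟩ := dvd_iterate_mul_derivative hdvd dvd_rfl k
  obtain ⟨C, hC⟩ := exists_abs_eval_sigmoid_le q
  refine ⟨C, fun t ↦ ?_⟩
  have hprofile := radialProfile_nonneg (exp_pos t)
  have hderiv : iteratedDeriv k (fun s ↦ radialProfile (exp s)) t =
      radialProfile (exp t) * q.eval (sigmoid t) := by
    simp only [radialProfile_exp, iteratedDeriv_eval_sigmoid, hq]
    rw [eval_mul]
  rw [hderiv, abs_mul, abs_of_nonneg hprofile, mul_comm]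
  gcongr
  exact hC t

lemma contDiff_radialProfile_exp {n : WithTop ℕ∞} :
    ContDiff ℝ n (fun t ↦ radialProfile (exp t)) := by
  unfold radialProfile
  exact ContDiff.div (by fun_prop) (by fun_prop) fun t ↦ by positivity

lemma abs_iteratedDeriv_mul_le {w g : ℝ → ℝ} {C : ℕ → ℝ} {k : ℕ} {t A M : ℝ}
    (hw : ContDiffAt ℝ k w t) (hg : ContDiffAt ℝ k g t)
    (hwA : ∀ i ≤ k, |iteratedDeriv i w t| ≤ C i * A) (hgM : ∀ i ≤ k, |iteratedDeriv i g t| ≤ M) :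
    |iteratedDeriv k (w * g) t| ≤ (∑ i ∈ Finset.range (k + 1), k.choose i * C i) * A * M := by
  rw [iteratedDeriv_mul hw hg]
  calc
    _ ≤ ∑ i ∈ Finset.range (k + 1),
        |k.choose i * iteratedDeriv i w t * iteratedDeriv (k - i) g t| :=
      Finset.abs_sum_le_sum_abs _ _
    _ ≤ ∑ i ∈ Finset.range (k + 1), k.choose i * (C i * A * M) := by
      refine Finset.sum_le_sum fun i hi ↦ ?_
      rw [mul_assoc, abs_mul, abs_mul, Nat.abs_cast]
      have hwi := hwA i (Nat.lt_succ_iff.1 (Finset.mem_range.1 hi))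
      have hgi := hgM (k - i) (Nat.sub_le k i)
      have hCA := (abs_nonneg _).trans hwi
      gcongr
    _ = _ := by
      rw [Finset.sum_mul, Finset.sum_mul]
      exact Finset.sum_congr rfl fun i _ ↦ by ring

lemma exists_abs_DR_iterate_radialProfile_mul_le (k : ℕ) :
    ∃ C, 0 ≤ C ∧ ∀ (F : ℝ → ℝ → ℝ) (R β M : ℝ), ContDiffOn ℝ k (fun r ↦ F r β) (Ioi 0) → 0 < R →
      (∀ i ≤ k, |DR^[i] F R β| ≤ M) →
      |DR^[k] (fun r b ↦ radialProfile r * F r b) R β| ≤ C * radialProfile R * M := by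
  choose C hC using exists_abs_iteratedDeriv_radialProfile_exp_le
  have hC₀ (i : ℕ) : 0 ≤ C i := by
    have hpos : 0 < radialProfile (exp 0) := by unfold radialProfile; positivity
    exact nonneg_of_mul_nonneg_left ((abs_nonneg _).trans (hC i 0)) hpos
  refine ⟨∑ i ∈ Finset.range (k + 1), k.choose i * C i,
    Finset.sum_nonneg fun i _ ↦ mul_nonneg (Nat.cast_nonneg _) (hC₀ i),
    fun F R β M hF hR hM ↦ ?_⟩
  obtain ⟨t, rfl⟩ : ∃ t, exp t = R := ⟨log R, exp_log hR⟩
  have hFt : ContDiffAt ℝ k (fun s ↦ F (exp s) β) t :=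
    (hF.contDiffAt (Ioi_mem_nhds hR)).comp t contDiff_exp.contDiffAt
  rw [DR_iterate_exp]
  exact abs_iteratedDeriv_mul_le contDiff_radialProfile_exp.contDiffAt hFt (fun i _ ↦ hC i t)
    fun i hi ↦ DR_iterate_exp i F t β ▸ hM i hi

end RadialProfile

section Smoothness

lemma isOpen_Qdom : IsOpen Qdom := isOpen_Ioi.prod isOpen_Ioo

lemma contDiffOn_lineDeriv {E F : Type*} [NormedAddCommGroup E] [NormedSpace ℝ E]
    [NormedAddCommGroup F] [NormedSpace ℝ F] {f : E → F} {s : Set E} {n : ℕ} (hs : IsOpen s)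
    (hf : ContDiffOn ℝ (n + 1 : ℕ) f s) (v : E) :
    ContDiffOn ℝ n (fun x ↦ lineDeriv ℝ f x v) s := by
  have hfderiv : ContDiffOn ℝ n (fun x ↦ fderiv ℝ f x v) s :=
    (hf.fderiv_of_isOpen hs (by norm_cast)).clm_apply contDiffOn_const
  refine hfderiv.congr fun x hx ↦ DifferentiableAt.lineDeriv_eq_fderiv ?_
  exact (hf.differentiableOn (by norm_cast)).differentiableAt (hs.mem_nhds hx)

lemma DR_eq_mul_lineDeriv (f : ℝ → ℝ → ℝ) (R β : ℝ) :
    DR f R β = R * lineDeriv ℝ (Function.uncurry f) (R, β) (1, 0) := by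
  simp [DR, lineDeriv, deriv_comp_const_add (f · β)]

lemma Dbeta_eq_mul_lineDeriv (f : ℝ → ℝ → ℝ) (R β : ℝ) :
    Dbeta f R β = sin (2 * β) * lineDeriv ℝ (Function.uncurry f) (R, β) (0, 1) := by
  simp [Dbeta, lineDeriv, deriv_comp_const_add (f R)]

variable {f : ℝ → ℝ → ℝ} {n : ℕ}

lemma contDiffOn_DR_iterate (k : ℕ) (hf : ContDiffOn ℝ (n + k : ℕ) (Function.uncurry f) Qdom) :
    ContDiffOn ℝ n (Function.uncurry (DR^[k] f)) Qdom := by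
  induction k generalizing f with
  | zero => exact hf
  | succ k ih =>
    refine ih (ContDiffOn.congr ?_ fun x _ ↦ DR_eq_mul_lineDeriv f x.1 x.2)
    exact contDiffOn_fst.mul (contDiffOn_lineDeriv isOpen_Qdom hf (1, 0))

lemma contDiffOn_Dbeta_iterate (j : ℕ) (hf : ContDiffOn ℝ (n + j : ℕ) (Function.uncurry f) Qdom) :
    ContDiffOn ℝ n (Function.uncurry (Dbeta^[j] f)) Qdom := by
  induction j generalizing f with
  | zero => exact hf
  | succ j ih =>
    refine ih (ContDiffOn.congr ?_ fun x _ ↦ Dbeta_eq_mul_lineDeriv f x.1 x.2)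
    exact ContDiffOn.mul (by fun_prop) (contDiffOn_lineDeriv isOpen_Qdom hf (0, 1))

lemma contDiffOn_radial_slice (hf : ContDiffOn ℝ n (Function.uncurry f) Qdom) {β : ℝ}
    (hβ : β ∈ Ioo 0 (π / 2)) : ContDiffOn ℝ n (fun r ↦ f r β) (Ioi 0) :=
  hf.comp (contDiffOn_id.prodMk contDiffOn_const) fun _ hr ↦ ⟨hr, hβ⟩

end Smoothness

lemma exists_abs_DR_iterate_Dbeta_iterate_le (k : ℕ) :
    ∃ C, 0 ≤ C ∧ ∀ (j : ℕ) (f : ℝ → ℝ → ℝ) (R β M : ℝ),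
      ContDiffOn ℝ (k + j : ℕ) (Function.uncurry f) Qdom → 0 < R → β ∈ Ioo 0 (π / 2) →
      (∀ i ≤ k, |DR^[i] (Dbeta^[j] fun R β ↦ (1 + R) ^ 3 / R ^ 2 * f R β) R β| ≤ M) →
      |DR^[k] (Dbeta^[j] f) R β| ≤ C * radialProfile R * M := by
  obtain ⟨C, hC₀, hC⟩ := exists_abs_DR_iterate_radialProfile_mul_le k
  refine ⟨C, hC₀, fun j f R β M hf hR hβ hM ↦ ?_⟩
  have hcomm : (Dbeta^[j] fun R β ↦ (1 + R) ^ 3 / R ^ 2 * f R β) =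
      fun R β ↦ (1 + R) ^ 3 / R ^ 2 * Dbeta^[j] f R β :=
    Dbeta_iterate_radial_mul j (fun R ↦ (1 + R) ^ 3 / R ^ 2) f
  have hweight : ContDiffOn ℝ k (fun r : ℝ ↦ (1 + r) ^ 3 / r ^ 2) (Ioi 0) :=
    ContDiffOn.div (by fun_prop) (by fun_prop) fun r hr ↦ pow_ne_zero 2 (ne_of_gt hr)
  have hslice := hweight.mul (contDiffOn_radial_slice (contDiffOn_Dbeta_iterate j hf) hβ)
  rw [hcomm] at hM
  rw [DR_iterate_congr k (g := fun r b ↦ radialProfile r * ((1 + r) ^ 3 / r ^ 2 * Dbeta^[j] f r b))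
    (fun r hr ↦ (radialProfile_mul_inv_mul hr _).symm) hR]
  exact hC _ R β M hslice hR hM

section SupNorm

variable {f : ℝ → ℝ → ℝ} {R β : ℝ}

lemma abs_le_supDom (hf : BddDom f) (hR : 0 < R) (hβ : β ∈ Ioo 0 (π / 2)) :
    |f R β| ≤ supDom f := by
  obtain ⟨M, hM⟩ := hf
  have : Nonempty (Ioo 0 (π / 2)) := ⟨⟨β, hβ⟩⟩
  calc
    |f R β| ≤ ⨆ b : Ioo 0 (π / 2), |f R b| :=
      le_ciSup (f := fun b : Ioo 0 (π / 2) ↦ |f R b|)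
        ⟨M, forall_mem_range.2 fun b ↦ hM R hR b b.2⟩ ⟨β, hβ⟩
    _ ≤ supDom f :=
      le_ciSup (f := fun r : Ioi (0 : ℝ) ↦ ⨆ b : Ioo 0 (π / 2), |f r b|)
        ⟨M, forall_mem_range.2 fun r ↦ ciSup_le fun b ↦ hM r r.2 b b.2⟩ ⟨R, hR⟩

lemma supDom_nonneg (f : ℝ → ℝ → ℝ) : 0 ≤ supDom f :=
  iSup_nonneg fun _ ↦ iSup_nonneg fun _ ↦ abs_nonneg _

lemma sin_two_mul_pos (hβ : β ∈ Ioo 0 (π / 2)) : 0 < sin (2 * β) :=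
  sin_pos_of_pos_of_lt_pi (by linarith [hβ.1]) (by linarith [hβ.2])

variable {α : ℝ} {l k j : ℕ}

lemma Wnorm_nonneg (α : ℝ) (l : ℕ) (f : ℝ → ℝ → ℝ) : 0 ≤ Wnorm α l f :=
  add_nonneg (Finset.sum_nonneg fun _ _ ↦ supDom_nonneg _)
    (Finset.sum_nonneg fun _ _ ↦ supDom_nonneg _)

lemma abs_DR_iterate_le_Wnorm (hf : WFin α l f) (hk : k ≤ l) (hR : 0 < R)
    (hβ : β ∈ Ioo 0 (π / 2)) : |DR^[k] f R β| ≤ Wnorm α l f := by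
  refine (abs_le_supDom (hf.1 k hk) hR hβ).trans (le_add_of_le_of_nonneg ?_ ?_)
  · exact Finset.single_le_sum (f := fun k ↦ supDom (DR^[k] f)) (fun _ _ ↦ supDom_nonneg _)
      (Finset.mem_range_succ_iff.2 hk)
  · exact Finset.sum_nonneg fun _ _ ↦ supDom_nonneg _

lemma rpow_neg_mul_abs_DR_iterate_div_le_Wnorm (hf : WFin α l f) (hkj : k + j ≤ l) (hj : 1 ≤ j)
    (hR : 0 < R) (hβ : β ∈ Ioo 0 (π / 2)) :
    sin (2 * β) ^ (-(α / 5)) *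
      |DR^[k] (fun r b ↦ Dbeta^[j] f r b / (α / 10 + sin (2 * b))) R β| ≤ Wnorm α l f := by
  rw [← abs_of_pos (rpow_pos_of_pos (sin_two_mul_pos hβ) (-(α / 5))), ← abs_mul]
  refine (abs_le_supDom (hf.2 k j hkj hj) hR hβ).trans (le_add_of_nonneg_of_le ?_ ?_)
  · exact Finset.sum_nonneg fun _ _ ↦ supDom_nonneg _
  · exact Finset.single_le_sum (a := (k, j)) (f := fun p : ℕ × ℕ ↦ supDom fun R β ↦
      sin (2 * β) ^ (-(α / 5)) *
        DR^[p.1] (fun R' β' ↦ Dbeta^[p.2] f R' β' / (α / 10 + sin (2 * β'))) R β)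
      (fun _ _ ↦ supDom_nonneg _)
      (by simp only [Finset.mem_filter, Finset.mem_product, Finset.mem_range]; omega)

lemma abs_DR_iterate_Dbeta_iterate_le_Wnorm (hα : 0 < α) (hf : WFin α l f) (hkj : k + j ≤ l)
    (hj : 1 ≤ j) (hR : 0 < R) (hβ : β ∈ Ioo 0 (π / 2)) :
    |DR^[k] (Dbeta^[j] f) R β| ≤
      (α / 10 + sin (2 * β)) * sin (2 * β) ^ (α / 5) * Wnorm α l f := by
  have hsin := sin_two_mul_pos hβ
  set G : ℝ → ℝ → ℝ := fun r b ↦ Dbeta^[j] f r b / (α / 10 + sin (2 * b))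
  have hfactor : DR^[k] (Dbeta^[j] f) R β = (α / 10 + sin (2 * β)) * DR^[k] G R β := by
    rw [← DR_iterate_angular_mul k (fun b ↦ α / 10 + sin (2 * b)) G hR]
    exact DR_iterate_congr k (fun r _ ↦ (mul_div_cancel₀ _ (by positivity)).symm) hR
  have hG := rpow_neg_mul_abs_DR_iterate_div_le_Wnorm hf hkj hj hR hβ
  rw [rpow_neg hsin.le, inv_mul_le_iff₀ (rpow_pos_of_pos hsin _)] at hG
  rw [hfactor, abs_mul, abs_of_pos (by positivity), mul_assoc]
  gcongr

end SupNorm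

section AngularIntegral

variable {p β : ℝ}

lemma le_sin_two_mul {x : ℝ} (hx₀ : 0 ≤ x) (hx : x ≤ π / 4) : x ≤ sin (2 * x) := by
  refine le_trans ?_ (mul_le_sin (x := 2 * x) (by linarith) (by linarith))
  rw [div_mul_eq_mul_div, le_div_iff₀ pi_pos]
  nlinarith [pi_le_four]

lemma sin_two_mul_rpow_le (p : ℝ) (hβ : β ∈ Ioo 0 (π / 2)) :
    sin (2 * β) ^ p ≤ β ^ p + (π / 2 - β) ^ p + 1 := by
  have hβ' : 0 < π / 2 - β := sub_pos.2 hβ.2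
  have hrpow := rpow_nonneg hβ.1.le p
  have hrpow' := rpow_nonneg hβ'.le p
  rcases le_total 0 p with hp | hp
  · linarith [rpow_le_one (sin_two_mul_pos hβ).le (sin_le_one _) hp]
  rcases le_total β (π / 4) with h | h
  · linarith [rpow_le_rpow_of_nonpos hβ.1 (le_sin_two_mul hβ.1.le h) hp]
  · have hsin : π / 2 - β ≤ sin (2 * β) := by
      rw [← sin_pi_sub, show π - 2 * β = 2 * (π / 2 - β) by ring]
      exact le_sin_two_mul hβ'.le (by linarith)
    linarith [rpow_le_rpow_of_nonpos hβ' hsin hp]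

lemma intervalIntegrable_sub_rpow (hp : -1 < p) (c : ℝ) :
    IntervalIntegrable (fun x ↦ (c - x) ^ p) volume 0 c := by
  have h := (intervalIntegral.intervalIntegrable_rpow' (a := 0) (b := c) hp).comp_sub_left c
  simpa only [sub_zero, sub_self] using h.symm

lemma intervalIntegrable_rpow_add_sub_rpow_add_one (hp : -1 < p) (c : ℝ) :
    IntervalIntegrable (fun x ↦ x ^ p + (c - x) ^ p + 1) volume 0 c :=
  ((intervalIntegral.intervalIntegrable_rpow' hp).add (intervalIntegrable_sub_rpow hp c)).add
    intervalIntegrable_const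

lemma integral_rpow_add_sub_rpow_add_one (hp : -1 < p) (c : ℝ) :
    ∫ x in 0..c, (x ^ p + (c - x) ^ p + 1) = 2 * c ^ (p + 1) / (p + 1) + c := by
  have hrpow := intervalIntegral.intervalIntegrable_rpow' (a := 0) (b := c) hp
  have hsub := intervalIntegrable_sub_rpow hp c
  rw [intervalIntegral.integral_add (hrpow.add hsub) intervalIntegrable_const,
    intervalIntegral.integral_add hrpow hsub, intervalIntegral.integral_comp_sub_left (· ^ p),
    sub_self, sub_zero, integral_rpow (.inl hp), zero_rpow (by linarith),
    intervalIntegral.integral_const]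
  simp only [smul_eq_mul]
  ring

lemma integrableOn_sin_two_mul_rpow (hp : -1 < p) :
    IntegrableOn (fun β ↦ sin (2 * β) ^ p) (Ioo 0 (π / 2)) := by
  have hmajorant := (intervalIntegrable_iff_integrableOn_Ioo_of_le (by positivity)).1
    (intervalIntegrable_rpow_add_sub_rpow_add_one hp (π / 2))
  refine hmajorant.mono' ?_ ((ae_restrict_iff' measurableSet_Ioo).2 (.of_forall fun β hβ ↦ ?_))
  · exact Measurable.aestronglyMeasurable (by fun_prop)
  · rw [norm_of_nonneg (rpow_nonneg (sin_two_mul_pos hβ).le p)]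
    exact sin_two_mul_rpow_le p hβ

lemma setIntegral_sin_two_mul_rpow_le (hp : -1 < p) :
    ∫ β in Ioo 0 (π / 2), sin (2 * β) ^ p ≤ 2 * (π / 2) ^ (p + 1) / (p + 1) + π / 2 := by
  have hpi : 0 ≤ π / 2 := by positivity
  rw [← integral_rpow_add_sub_rpow_add_one hp, intervalIntegral.integral_of_le hpi,
    integral_Ioc_eq_integral_Ioo]
  exact setIntegral_mono_on (integrableOn_sin_two_mul_rpow hp)
    ((intervalIntegrable_iff_integrableOn_Ioo_of_le hpi).1
      (intervalIntegrable_rpow_add_sub_rpow_add_one hp _))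
    measurableSet_Ioo fun β hβ ↦ sin_two_mul_rpow_le p hβ

lemma add_sq_mul_rpow_le {x : ℝ} (hx₀ : 0 < x) (hx : x ≤ 1) (hp : -2 ≤ p) (c : ℝ) :
    (c + x) ^ 2 * x ^ p ≤ 2 * c ^ 2 * x ^ p + 2 := by
  have hone : x ^ 2 * x ^ p ≤ 1 := by
    rw [← rpow_two, ← rpow_add hx₀]
    exact rpow_le_one hx₀.le hx (by linarith)
  calc
    (c + x) ^ 2 * x ^ p ≤ (2 * (c ^ 2 + x ^ 2)) * x ^ p := by
      gcongr
      exact add_sq_le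
    _ = 2 * c ^ 2 * x ^ p + 2 * (x ^ 2 * x ^ p) := by ring
    _ ≤ 2 * c ^ 2 * x ^ p + 2 := by linarith

lemma integrableOn_add_sin_two_mul_sq_mul_rpow (hp : -1 < p) (c : ℝ) :
    IntegrableOn (fun β ↦ (c + sin (2 * β)) ^ 2 * sin (2 * β) ^ p) (Ioo 0 (π / 2)) := by
  refine (integrableOn_sin_two_mul_rpow hp).bdd_mul (c := (|c| + 1) ^ 2)
    (Continuous.aestronglyMeasurable (by fun_prop)) (.of_forall fun β ↦ ?_)
  rw [norm_pow, norm_eq_abs]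
  gcongr
  exact (abs_add_le _ _).trans (by gcongr; exact abs_sin_le_one _)

lemma setIntegral_add_sin_two_mul_sq_mul_rpow_le (hp : -1 < p) (c : ℝ) :
    ∫ β in Ioo 0 (π / 2), (c + sin (2 * β)) ^ 2 * sin (2 * β) ^ p ≤
      2 * c ^ 2 * (2 * (π / 2) ^ (p + 1) / (p + 1) + π / 2) + π := by
  have hint := (integrableOn_sin_two_mul_rpow hp).const_mul (2 * c ^ 2)
  have hconst : IntegrableOn (fun _ ↦ (2 : ℝ)) (Ioo 0 (π / 2)) := integrableOn_const (by simp)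
  have hsum : IntegrableOn (fun β ↦ 2 * c ^ 2 * sin (2 * β) ^ p + 2) (Ioo 0 (π / 2)) :=
    hint.add hconst
  calc
    _ ≤ ∫ β in Ioo 0 (π / 2), (2 * c ^ 2 * sin (2 * β) ^ p + 2) :=
      setIntegral_mono_on (integrableOn_add_sin_two_mul_sq_mul_rpow hp c) hsum
        measurableSet_Ioo fun β hβ ↦
          add_sq_mul_rpow_le (sin_two_mul_pos hβ) (sin_le_one _) (by linarith) c
    _ = 2 * c ^ 2 * (∫ β in Ioo 0 (π / 2), sin (2 * β) ^ p) + π := by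
      rw [integral_add hint hconst, integral_const_mul, setIntegral_const, volume_real_Ioo_of_le
        (by positivity), smul_eq_mul]
      ring
    _ ≤ _ := by
      gcongr
      exact setIntegral_sin_two_mul_rpow_le hp

/- The integral of `sin(2β)^(3α/10 - 1)` blows up like `1/α` as `α → 0`, which the factor
`(α/10)²` compensates. -/
lemma exists_setIntegral_add_sin_two_mul_sq_mul_rpow_le (α₀ : ℝ) :
    ∃ K, ∀ α, 0 < α → α ≤ α₀ →
      ∫ β in Ioo 0 (π / 2), (α / 10 + sin (2 * β)) ^ 2 * sin (2 * β) ^ (3 * α / 10 - 1) ≤ K := by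
  refine ⟨2 / 15 * α₀ * (π / 2) ^ (3 * α₀ / 10) + α₀ ^ 2 / 100 * π + π, fun α hα hα₀ ↦ ?_⟩
  have hα₀_pos : 0 < α₀ := hα.trans_le hα₀
  have hpi : 1 ≤ π / 2 := by linarith [two_le_pi]
  calc
    _ ≤ _ := setIntegral_add_sin_two_mul_sq_mul_rpow_le (by linarith) (α / 10)
    _ = 2 / 15 * α * (π / 2) ^ (3 * α / 10) + α ^ 2 / 100 * π + π := by
      rw [sub_add_cancel]
      field_simp
      ring
    _ ≤ _ := by gcongr

end AngularIntegral

section WeightedL2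

/-- The common form `(1+R)⁴R⁻⁴ sin(2β)^q` of the weights `φ₁` (`q = -σ`) and `φ₂` (`q = -γ`). -/
def singularWeight (q : ℝ) : ℝ → ℝ → ℝ := fun R β ↦ (1 + R) ^ 4 / R ^ 4 * sin (2 * β) ^ q

variable {q R β : ℝ}

lemma singularWeight_nonneg (hR : 0 < R) (hβ : β ∈ Ioo 0 (π / 2)) : 0 ≤ singularWeight q R β := by
  have hsin := sin_two_mul_pos hβ
  unfold singularWeight
  positivity

lemma continuousOn_singularWeight (q : ℝ) :
    ContinuousOn (Function.uncurry (singularWeight q)) Qdom := by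
  refine ContinuousOn.mul (ContinuousOn.div (by fun_prop) (by fun_prop) ?_)
    (ContinuousOn.rpow_const (by fun_prop) ?_)
  · exact fun x hx ↦ pow_ne_zero 4 (ne_of_gt hx.1)
  · exact fun x hx ↦ .inl (sin_two_mul_pos hx.2).ne'

lemma radialProfile_sq_mul (hR : 0 < R) :
    radialProfile R ^ 2 * ((1 + R) ^ 4 / R ^ 4) = ((1 + R) ^ 2)⁻¹ := by
  unfold radialProfile
  field_simp

lemma integrableOn_Ioi_inv_one_add_sq : IntegrableOn (fun R : ℝ ↦ ((1 + R) ^ 2)⁻¹) (Ioi 0) := by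
  refine integrable_inv_one_add_sq.integrableOn.mono' (Measurable.aestronglyMeasurable
    (by fun_prop)) ((ae_restrict_iff' measurableSet_Ioi).2 (.of_forall fun R hR ↦ ?_))
  have hR₀ : 0 < R := hR
  rw [norm_of_nonneg (by positivity)]
  gcongr
  nlinarith

lemma volume_restrict_Qdom : (volume : Measure (ℝ × ℝ)).restrict Qdom =
    (volume.restrict (Ioi 0)).prod (volume.restrict (Ioo 0 (π / 2))) :=
  (Measure.prod_restrict _ _).symm

lemma norm2_mul_sqrt_eq {h w : ℝ → ℝ → ℝ} (hint : Integrable2 fun R β ↦ h R β ^ 2 * w R β)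
    (hw : ∀ R ∈ Ioi 0, ∀ β ∈ Ioo 0 (π / 2), 0 ≤ w R β) :
    norm2 (fun R β ↦ h R β * √(w R β)) = √(∫ x in Qdom, h x.1 x.2 ^ 2 * w x.1 x.2) := by
  unfold norm2 inner2
  rw [volume_restrict_Qdom, integral_prod _ (volume_restrict_Qdom ▸ hint)]
  congr 1
  refine setIntegral_congr_fun measurableSet_Ioi fun R hR ↦
    setIntegral_congr_fun measurableSet_Ioo fun β hβ ↦ ?_
  change h R β * √(w R β) * (h R β * √(w R β)) = h R β ^ 2 * w R β
  rw [mul_mul_mul_comm, mul_self_sqrt (hw R hR β hβ), sq]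

variable {h : ℝ → ℝ → ℝ} {b : ℝ → ℝ} {A : ℝ}

lemma sq_mul_singularWeight_le (hR : 0 < R) (hβ : β ∈ Ioo 0 (π / 2))
    (hhb : |h R β| ≤ A * (radialProfile R * b β)) :
    h R β ^ 2 * singularWeight q R β ≤
      A ^ 2 * (((1 + R) ^ 2)⁻¹ * (b β ^ 2 * sin (2 * β) ^ q)) := by
  calc
    h R β ^ 2 * singularWeight q R β
      ≤ (A * (radialProfile R * b β)) ^ 2 * singularWeight q R β :=
      mul_le_mul_of_nonneg_right (sq_le_sq.2 (hhb.trans (le_abs_self _)))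
        (singularWeight_nonneg hR hβ)
    _ = A ^ 2 * (radialProfile R ^ 2 * ((1 + R) ^ 4 / R ^ 4) * (b β ^ 2 * sin (2 * β) ^ q)) := by
      unfold singularWeight
      ring
    _ = _ := by rw [radialProfile_sq_mul hR]

lemma integrableOn_radial_mul_angular (hb : IntegrableOn (fun β ↦ b β ^ 2 * sin (2 * β) ^ q)
    (Ioo 0 (π / 2))) : IntegrableOn (fun x : ℝ × ℝ ↦
      A ^ 2 * (((1 + x.1) ^ 2)⁻¹ * (b x.2 ^ 2 * sin (2 * x.2) ^ q))) Qdom := by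
  rw [IntegrableOn, volume_restrict_Qdom]
  exact (integrableOn_Ioi_inv_one_add_sq.mul_prod hb).const_mul _

lemma integrable2_sq_mul_singularWeight (hh : ContinuousOn (Function.uncurry h) Qdom)
    (hb : IntegrableOn (fun β ↦ b β ^ 2 * sin (2 * β) ^ q) (Ioo 0 (π / 2)))
    (hhb : ∀ R ∈ Ioi 0, ∀ β ∈ Ioo 0 (π / 2), |h R β| ≤ A * (radialProfile R * b β)) :
    Integrable2 fun R β ↦ h R β ^ 2 * singularWeight q R β := by
  have hQdom := isOpen_Qdom.measurableSet
  refine (integrableOn_radial_mul_angular (A := A) hb).mono' ?_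
    ((ae_restrict_iff' hQdom).2 (.of_forall fun x hx ↦ ?_))
  · exact ((hh.pow 2).mul (continuousOn_singularWeight q)).aestronglyMeasurable hQdom
  · have hnonneg := mul_nonneg (sq_nonneg (h x.1 x.2)) (singularWeight_nonneg (q := q) hx.1 hx.2)
    exact (norm_of_nonneg hnonneg).trans_le
      (sq_mul_singularWeight_le hx.1 hx.2 (hhb _ hx.1 _ hx.2))

lemma norm2_mul_sqrt_singularWeight_le (hh : ContinuousOn (Function.uncurry h) Qdom) (hA : 0 ≤ A)
    (hb : IntegrableOn (fun β ↦ b β ^ 2 * sin (2 * β) ^ q) (Ioo 0 (π / 2)))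
    (hhb : ∀ R ∈ Ioi 0, ∀ β ∈ Ioo 0 (π / 2), |h R β| ≤ A * (radialProfile R * b β)) :
    norm2 (fun R β ↦ h R β * √(singularWeight q R β)) ≤
      A * √((∫ R in Ioi (0 : ℝ), ((1 + R) ^ 2)⁻¹) *
        ∫ β in Ioo 0 (π / 2), b β ^ 2 * sin (2 * β) ^ q) := by
  have hint := integrable2_sq_mul_singularWeight hh hb hhb
  rw [norm2_mul_sqrt_eq hint fun R hR β hβ ↦ singularWeight_nonneg hR hβ]
  calc
    _ ≤ √(∫ x in Qdom, A ^ 2 * (((1 + x.1) ^ 2)⁻¹ * (b x.2 ^ 2 * sin (2 * x.2) ^ q))) :=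
      sqrt_le_sqrt <| setIntegral_mono_on hint (integrableOn_radial_mul_angular hb)
        isOpen_Qdom.measurableSet fun x hx ↦
          sq_mul_singularWeight_le hx.1 hx.2 (hhb _ hx.1 _ hx.2)
    _ = _ := by
      rw [volume_restrict_Qdom, integral_const_mul,
        integral_prod_mul (fun R : ℝ ↦ ((1 + R) ^ 2)⁻¹) fun β ↦ b β ^ 2 * sin (2 * β) ^ q,
        sqrt_mul (sq_nonneg A), sqrt_sq hA]

end WeightedL2

section Embedding

lemma exists_norm2_mul_sqrt_singularWeight_le (k : ℕ) :
    ∃ C, 0 ≤ C ∧ ∀ (j : ℕ) (q W : ℝ) (b : ℝ → ℝ) (f : ℝ → ℝ → ℝ), 0 ≤ W →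
      ContDiffOn ℝ (k + j : ℕ) (Function.uncurry f) Qdom →
      IntegrableOn (fun β ↦ b β ^ 2 * sin (2 * β) ^ q) (Ioo 0 (π / 2)) →
      (∀ i ≤ k, ∀ R ∈ Ioi 0, ∀ β ∈ Ioo 0 (π / 2),
        |DR^[i] (Dbeta^[j] fun R β ↦ (1 + R) ^ 3 / R ^ 2 * f R β) R β| ≤ b β * W) →
      Integrable2 (fun R β ↦ DR^[k] (Dbeta^[j] f) R β ^ 2 * singularWeight q R β) ∧
      norm2 (fun R β ↦ DR^[k] (Dbeta^[j] f) R β * √(singularWeight q R β)) ≤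
        C * √(∫ β in Ioo 0 (π / 2), b β ^ 2 * sin (2 * β) ^ q) * W := by
  obtain ⟨C, hC₀, hC⟩ := exists_abs_DR_iterate_Dbeta_iterate_le k
  set I := ∫ R in Ioi (0 : ℝ), ((1 + R) ^ 2)⁻¹
  have hI : 0 ≤ I := integral_nonneg fun R ↦ by positivity
  refine ⟨C * √I, by positivity, fun j q W b f hW hf hb hbound ↦ ?_⟩
  have hcont : ContinuousOn (Function.uncurry (DR^[k] (Dbeta^[j] f))) Qdom :=
    (contDiffOn_DR_iterate (n := 0) k (contDiffOn_Dbeta_iterate j (by rwa [zero_add]))).continuousOn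
  have hpointwise : ∀ R ∈ Ioi 0, ∀ β ∈ Ioo 0 (π / 2),
      |DR^[k] (Dbeta^[j] f) R β| ≤ C * W * (radialProfile R * b β) := fun R hR β hβ ↦
    (hC j f R β _ hf hR hβ fun i hi ↦ hbound i hi R hR β hβ).trans_eq (by ring)
  refine ⟨integrable2_sq_mul_singularWeight hcont hb hpointwise, ?_⟩
  refine (norm2_mul_sqrt_singularWeight_le hcont (by positivity) hb hpointwise).trans_eq ?_
  rw [sqrt_mul hI]
  ring

lemma exists_norm2_DR_iterate_le (k : ℕ) :
    ∃ C, ∀ (α : ℝ) (m : ℕ) (f : ℝ → ℝ → ℝ), k ≤ m → ContDiffOn ℝ m (Function.uncurry f) Qdom →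
      WFin α m (fun R β ↦ (1 + R) ^ 3 / R ^ 2 * f R β) →
      Integrable2 (fun R β ↦ DR^[k] f R β ^ 2 * phi1 R β) ∧
      norm2 (fun R β ↦ DR^[k] f R β * √(phi1 R β)) ≤
        C * Wnorm α m (fun R β ↦ (1 + R) ^ 3 / R ^ 2 * f R β) := by
  obtain ⟨C, -, hC⟩ := exists_norm2_mul_sqrt_singularWeight_le k
  refine ⟨_, fun α m f hk hf hW ↦ hC 0 (-(99 / 100)) _ (fun _ ↦ 1) f (Wnorm_nonneg _ _ _)
    (hf.of_le (by exact_mod_cast hk)) ?_ fun i hi R hR β hβ ↦ ?_⟩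
  · simpa only [one_pow, one_mul] using integrableOn_sin_two_mul_rpow (by norm_num)
  · rw [one_mul]
    exact abs_DR_iterate_le_Wnorm hW (hi.trans hk) hR hβ

lemma add_mul_rpow_sq_mul_rpow_neg {x : ℝ} (hx : 0 < x) (α : ℝ) :
    ((α / 10 + x) * x ^ (α / 5)) ^ 2 * x ^ (-(1 + α / 10)) =
      (α / 10 + x) ^ 2 * x ^ (3 * α / 10 - 1) := by
  rw [mul_pow, ← rpow_mul_natCast hx.le, mul_assoc, ← rpow_add hx]
  congr 2
  push_cast
  ring

lemma exists_norm2_DR_iterate_Dbeta_iterate_le (α₀ : ℝ) (k : ℕ) :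
    ∃ C, ∀ (α : ℝ) (j m : ℕ) (f : ℝ → ℝ → ℝ), 0 < α → α ≤ α₀ → k + j + 1 ≤ m →
      ContDiffOn ℝ m (Function.uncurry f) Qdom →
      WFin α m (fun R β ↦ (1 + R) ^ 3 / R ^ 2 * f R β) →
      Integrable2 (fun R β ↦ DR^[k] (Dbeta^[j + 1] f) R β ^ 2 * phi2 α R β) ∧
      norm2 (fun R β ↦ DR^[k] (Dbeta^[j + 1] f) R β * √(phi2 α R β)) ≤
        C * Wnorm α m (fun R β ↦ (1 + R) ^ 3 / R ^ 2 * f R β) := by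
  obtain ⟨C, hC₀, hC⟩ := exists_norm2_mul_sqrt_singularWeight_le k
  obtain ⟨K, hK⟩ := exists_setIntegral_add_sin_two_mul_sq_mul_rpow_le α₀
  refine ⟨C * √K, fun α j m f hα hα₀ hkj hf hW ↦ ?_⟩
  have hweight (β : ℝ) (hβ : β ∈ Ioo 0 (π / 2)) :=
    add_mul_rpow_sq_mul_rpow_neg (sin_two_mul_pos hβ) α
  have hWnorm := Wnorm_nonneg α m fun R β ↦ (1 + R) ^ 3 / R ^ 2 * f R β
  obtain ⟨hint, hnorm⟩ := hC (j + 1) (-(1 + α / 10)) _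
    (fun β ↦ (α / 10 + sin (2 * β)) * sin (2 * β) ^ (α / 5)) f hWnorm
    (hf.of_le (by exact_mod_cast hkj))
    ((integrableOn_congr_fun hweight measurableSet_Ioo).2
      (integrableOn_add_sin_two_mul_sq_mul_rpow (by linarith) _))
    fun i hi R hR β hβ ↦
      abs_DR_iterate_Dbeta_iterate_le_Wnorm hα hW (by omega) j.succ_pos hR hβ
  refine ⟨hint, hnorm.trans ?_⟩
  rw [setIntegral_congr_fun measurableSet_Ioo hweight]
  gcongr
  exact hK α hα hα₀

theorem W3infty_embeds_into_H3_general (m : ℕ) (α₀ : ℝ) :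
    ∃ C : ℝ, ∀ α : ℝ, 0 < α → α ≤ α₀ →
      ∀ f : ℝ → ℝ → ℝ,
        ContDiffOn ℝ m (Function.uncurry f) Qdom →
        WFin α m (fun R β ↦ (1 + R) ^ 3 / R ^ 2 * f R β) →
        (∀ k ≤ m, Integrable2 (fun R β ↦ (DR^[k] f R β) ^ 2 * phi1 R β)) ∧
        (∀ i j : ℕ, i + j + 1 ≤ m →
          Integrable2 (fun R β ↦ (DR^[i] (Dbeta^[j + 1] f) R β) ^ 2 * phi2 α R β)) ∧
        Hnorm m phi1 (phi2 α) f ≤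
          C * Wnorm α m (fun R β ↦ (1 + R) ^ 3 / R ^ 2 * f R β) := by
  choose C₁ hC₁ using exists_norm2_DR_iterate_le
  choose C₂ hC₂ using exists_norm2_DR_iterate_Dbeta_iterate_le α₀
  refine ⟨∑ k ∈ Finset.range (m + 1), C₁ k +
    ∑ p ∈ (Finset.range (m + 1) ×ˢ Finset.range (m + 1)).filter (fun p ↦ p.1 + p.2 + 1 ≤ m),
      C₂ p.1, fun α hα hα₀ f hf hW ↦
    ⟨fun k hk ↦ (hC₁ k α m f hk hf hW).1,
      fun i j hij ↦ (hC₂ i α j m f hα hα₀ hij hf hW).1, ?_⟩⟩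
  rw [add_mul, Finset.sum_mul, Finset.sum_mul]
  refine add_le_add (Finset.sum_le_sum fun k hk ↦ ?_) (Finset.sum_le_sum fun p hp ↦ ?_)
  · exact (hC₁ k α m f (Finset.mem_range_succ_iff.1 hk) hf hW).2
  · exact (hC₂ p.1 α p.2 m f hα hα₀ (Finset.mem_filter.1 hp).2 hf hW).2

end Embedding

/-- the embedding `‖f‖_{H³} ≲ ‖((1+R)³/R²) f‖_{W^{3,∞}}`. -/
theorem W3infty_embeds_into_H3 :
    ∃ C : ℝ, ∀ α : ℝ, 0 < α → α ≤ 1/1000 →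
      ∀ f : ℝ → ℝ → ℝ,
        ContDiffOn ℝ 3 (Function.uncurry f) Qdom →
        WFin α 3 (fun R β => (1+R)^3/R^2 * f R β) →
        (∀ k ≤ 3, Integrable2 (fun R β => (DR^[k] f R β)^2 * phi1 R β)) ∧
        (∀ i j : ℕ, i + j + 1 ≤ 3 →
          Integrable2 (fun R β => (DR^[i] (Dbeta^[j+1] f) R β)^2 * phi2 α R β)) ∧
        Hnorm 3 phi1 (phi2 α) f ≤ C * Wnorm α 3 (fun R β => (1+R)^3/R^2 * f R β) :=
  W3infty_embeds_into_H3_general 3 (1 / 1000)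

end Paper
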